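/- Assume P̃^l_{ijk}α_l = P^l_{ijk}α_l at every (x,y) ∈ U × (ℝ^n \ {0}), fix p ∈ U with dα ≠ 0 at p, and assume that the vectors η^l and X^sX^l_s are linearly dependent at every nonzero y over p. Then the three vectors X^l (the Riemann–Finsler gradient of α), X_*^l (the Riemannian gradient of α, lifted vertically) and y^l (the Liouville vector) form a linearly dependent system at all nonzero y over p; equivalently, their 3×3 Gram determinant with respect to the metric g_{ij}(p,y) vanishes for every y ≠ 0. -/

import Mathlib

/-!
On the fibre over `p`, the covector `α_i` is constant and `g(X, ·) = dα`. Differentiating this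
identity and using the total symmetry of the Cartan tensor shows that `g(W, ·)` is the fibre
differential of `X^lα_l` (`gdown_Wup`). Together with `g(y, ·) = dE` (`gdown_euler`) and
`E_* = E·X^lα_l`, the linear dependence of `η` and `W` therefore says that `dE` and
`dE_* = g_*(y, ·)` are proportional on `ker dα` at every nonzero `y` (`wedge_zero`).

Since `E_*` is quadratic and `g_*(X_*, ·) = dα`, the restriction of `g_*(y, ·)` to `ker dα` does
not change along the direction `X_*`. Differentiating the proportionality in this direction
thus gives that `g(X_*, ·)` is also proportional to `g_*(y, ·)` on `ker dα` (`wedge_deriv`).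

If `y` is not a multiple of `X_*`, then `g_*(y, ·)` does not vanish on `ker dα`, so a nontrivial
combination of `X_*` and `y` is `g`-orthogonal to `ker dα` and hence a multiple of `X`
(`exists_relation`). The Gram determinant of a dependent system vanishes (`gram_det_zero`).
-/


/- Common framework: Finsler energies in local coordinates, following the paper's
   notation.  `x` is the base point, `y` the fiber (direction) variable. -/

noncomputable section
open scoped BigOperators

namespace FinslerConformal

/-- Vectors in local coordinates. -/
abbrev Vec (n : ℕ) := Fin n → ℝ

/-- Functions on `U × ℝⁿ`, written with separate base and fiber variables. -/
abbrev Fn (n : ℕ) := Vec n → Vec n → ℝ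

variable {n : ℕ}

/-- Partial derivative in the fiber variable `y`, in direction `i`. -/
def pdy (i : Fin n) (f : Fn n) : Fn n :=
  fun x y => fderiv ℝ (f x) y (Pi.single i 1)

/-- Partial derivative in the base variable `x`, in direction `i`. -/
def pdx (i : Fin n) (f : Fn n) : Fn n :=
  fun x y => fderiv ℝ (fun x' => f x' y) x (Pi.single i 1)

/-- Partial derivative `α_i = ∂α/∂x^i` of a function of the position only. -/
def pda (α : Vec n → ℝ) (i : Fin n) (x : Vec n) : ℝ :=
  fderiv ℝ α x (Pi.single i 1)

/-- Riemann–Finsler metric `g_{ij} = ∂²E/∂y^i∂y^j`. -/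
def gdown (E : Fn n) (i j : Fin n) : Fn n := pdy i (pdy j E)

/-- The Riemann–Finsler metric as a matrix. -/
def gmat (E : Fn n) (x y : Vec n) : Matrix (Fin n) (Fin n) ℝ :=
  Matrix.of fun i j => gdown E i j x y

/-- Inverse metric `g^{ij}`. -/
def gup (E : Fn n) (i j : Fin n) : Fn n := fun x y => (gmat E x y)⁻¹ i j

/-- First Cartan tensor `C_{ijk} = ∂g_{ij}/∂y^k`. -/
def cartanDown (E : Fn n) (i j k : Fin n) : Fn n := pdy k (gdown E i j)

/-- `C^l_{ij} = g^{lk} C_{ijk}`. -/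
def cartanUp (E : Fn n) (l i j : Fin n) : Fn n :=
  fun x y => ∑ k, gup E l k x y * cartanDown E i j k x y

/-- Geodesic spray coefficients
`G^l = ½ g^{lm}(y^k ∂²E/∂y^m∂x^k − ∂E/∂x^m)`. -/
def spray (E : Fn n) (l : Fin n) : Fn n :=
  fun x y => (1/2) * ∑ m, gup E l m x y *
    ((∑ k, y k * pdy m (pdx k E) x y) - pdx m E x y)

/-- `G^l_i = ∂G^l/∂y^i`. -/
def sprayD1 (E : Fn n) (l i : Fin n) : Fn n := pdy i (spray E l)

/-- `G^l_{ij} = ∂G^l_i/∂y^j`. -/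
def sprayD2 (E : Fn n) (l i j : Fin n) : Fn n := pdy j (sprayD1 E l i)

/-- `G^l_{ijk} = ∂G^l_{ij}/∂y^k`. -/
def sprayD3 (E : Fn n) (l i j k : Fin n) : Fn n := pdy k (sprayD2 E l i j)

/-- Mixed curvature of the Berwald connection `P^l_{ijk} = −G^l_{ijk}`. -/
def mixedCurv (E : Fn n) (l i j k : Fin n) : Fn n :=
  fun x y => - sprayD3 E l i j k x y

/-- Landsberg tensor
`P^l_{ij} = ½ g^{lm}(∂g_{jm}/∂x^i − 2G^k_i C_{jkm} − G^k_{ij} g_{km} − G^k_{im} g_{jk})`. -/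
def landsberg (E : Fn n) (l i j : Fin n) : Fn n :=
  fun x y => (1/2) * ∑ m, gup E l m x y *
    (pdx i (gdown E j m) x y
      - 2 * ∑ k, sprayD1 E k i x y * cartanDown E j k m x y
      - ∑ k, sprayD2 E k i j x y * gdown E k m x y
      - ∑ k, sprayD2 E k i m x y * gdown E j k x y)

/-- A Finsler energy on an open set `U ⊆ ℝⁿ`: `C^∞` on `U × (ℝⁿ \ {0})`,
positively 2-homogeneous in `y`, with positive definite fiberwise Hessian. -/
structure IsFinslerEnergy (U : Set (Vec n)) (E : Fn n) : Prop where
  smooth : ContDiffOn ℝ (⊤ : ℕ∞) (fun p : Vec n × Vec n => E p.1 p.2) (U ×ˢ {y : Vec n | y ≠ 0})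
  homog : ∀ x ∈ U, ∀ y : Vec n, y ≠ 0 → ∀ t : ℝ, 0 < t → E x (t • y) = t ^ 2 * E x y
  posdef : ∀ x ∈ U, ∀ y : Vec n, y ≠ 0 → (gmat E x y).PosDef

/-- Conformal change of the energy: `Ẽ = e^{2α} E`. -/
def confE (E : Fn n) (α : Vec n → ℝ) : Fn n :=
  fun x y => Real.exp (2 * α x) * E x y

/-- `X^l = g^{lm} α_m`. -/
def Xup (E : Fn n) (α : Vec n → ℝ) (l : Fin n) : Fn n :=
  fun x y => ∑ m, gup E l m x y * pda α m x

/-- `X^l_i = ∂X^l/∂y^i`. -/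
def XupD (E : Fn n) (α : Vec n → ℝ) (l i : Fin n) : Fn n := pdy i (Xup E α l)

/-- `X^l_{ij} = ∂²X^l/∂y^i∂y^j`. -/
def XupD2 (E : Fn n) (α : Vec n → ℝ) (l i j : Fin n) : Fn n := pdy j (XupD E α l i)

/-- Difference tensor of the mixed Berwald curvatures `B^l_{ijk} = G̃^l_{ijk} − G^l_{ijk}`. -/
def Bdiff (E : Fn n) (α : Vec n → ℝ) (l i j k : Fin n) : Fn n :=
  fun x y => sprayD3 (confE E α) l i j k x y - sprayD3 E l i j k x y

/-- vv-curvature of the Cartan connection `Q^l_{ijk} = C^l_{jm}C^m_{ik} − C^l_{im}C^m_{jk}`. -/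
def QUp (E : Fn n) (l i j k : Fin n) : Fn n :=
  fun x y => ∑ m, (cartanUp E l j m x y * cartanUp E m i k x y
    - cartanUp E l i m x y * cartanUp E m j k x y)

/-- Lowered vv-curvature `Q_{pijk} = g_{pl} Q^l_{ijk}`. -/
def QDown (E : Fn n) (p i j k : Fin n) : Fn n :=
  fun x y => ∑ l, gdown E p l x y * QUp E l i j k x y

/-- `y^m α_m`. -/
def yalpha (α : Vec n → ℝ) : Fn n := fun x y => ∑ m, y m * pda α m x

/-- `X^l α_l`, the Riemann–Finsler norm square of the gradient `X`. -/
def Xalpha (E : Fn n) (α : Vec n → ℝ) : Fn n :=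
  fun x y => ∑ l, Xup E α l x y * pda α l x

/-- Components of the projected vector field `η^l = X^l − ((y^mα_m)/(2E)) y^l`. -/
def etaUp (E : Fn n) (α : Vec n → ℝ) (l : Fin n) : Fn n :=
  fun x y => Xup E α l x y - (yalpha α x y / (2 * E x y)) * y l

/-- `η = η^l α_l = X^lα_l − (y^mα_m)²/(2E)`. -/
def etaSc (E : Fn n) (α : Vec n → ℝ) : Fn n :=
  fun x y => ∑ l, etaUp E α l x y * pda α l x

/-- `W^l = X^s X^l_s`. -/
def Wup (E : Fn n) (α : Vec n → ℝ) (l : Fin n) : Fn n :=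
  fun x y => ∑ s, Xup E α s x y * XupD E α l s x y

/-- The associated Riemannian energy `E_* = E · X^lα_l = E · g^{lm}α_lα_m`. -/
def Estar (E : Fn n) (α : Vec n → ℝ) : Fn n :=
  fun x y => E x y * Xalpha E α x y

/-- Riemannian gradient `X_*^l = g_*^{lk} α_k`, with respect to a Hessian matrix `gs`. -/
def Xstar (α : Vec n → ℝ) (gs : Matrix (Fin n) (Fin n) ℝ) (p : Vec n) : Vec n :=
  fun l => ∑ k, gs⁻¹ l k * pda α k p

/-- `b² = g_*^{kl} α_k α_l`. -/
def bsq (α : Vec n → ℝ) (gs : Matrix (Fin n) (Fin n) ℝ) (p : Vec n) : ℝ :=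
  ∑ k, ∑ l, gs⁻¹ k l * pda α k p * pda α l p

/-- The paper's Gram expression
`X^i_m X^m X^s_i α_s · ( X^lα_l − (y^mα_m)²/(2E) ) − ( X^k X^j_k α_j )²`. -/
def gramEtaW (E : Fn n) (α : Vec n → ℝ) : Fn n :=
  fun x y =>
    (∑ i, Wup E α i x y * ∑ s, XupD E α s i x y * pda α s x) *
      (Xalpha E α x y - (yalpha α x y) ^ 2 / (2 * E x y))
    - (∑ k, ∑ j, Xup E α k x y * XupD E α j k x y * pda α j x) ^ 2

/-- The curvature contraction `X^j X^s_j X^a X^c X^i_m X^m Q_{aisc}`. -/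
def Qcon (E : Fn n) (α : Vec n → ℝ) : Fn n :=
  fun x y => ∑ j, ∑ s, ∑ a, ∑ c, ∑ i,
    Xup E α j x y * XupD E α s j x y * Xup E α a x y * Xup E α c x y *
      Wup E α i x y * QDown E a i s c x y

/-- `θ = (X^l_s X^s α_l)/η`. -/
def thetaFn (E : Fn n) (α : Vec n → ℝ) : Fn n :=
  fun x y => (∑ l, Wup E α l x y * pda α l x) / etaSc E α x y

end FinslerConformal

namespace FinslerConformal

open scoped Matrix

/-! ### Fibre derivatives and Euler relations -/

/-- The partial derivatives determine the directional derivative. -/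
lemma fderiv_eq_sum {n : ℕ} (h : Vec n → ℝ) (y u : Vec n) :
    fderiv ℝ h y u = ∑ i, u i * fderiv ℝ h y (Pi.single i 1) := by
  have := LinearMap.pi_apply_eq_sum_univ (fderiv ℝ h y : Vec n →ₗ[ℝ] ℝ) u
  simp only [ContinuousLinearMap.coe_coe, smul_eq_mul] at this
  rw [this]
  refine Finset.sum_congr rfl fun i _ => ?_
  congr 2
  ext j
  simp [Pi.single_apply, eq_comm]

lemma contDiffAt_pdy {n : ℕ} {F : Fn n} {p y : Vec n} (h : ContDiffAt ℝ (⊤ : ℕ∞) (F p) y)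
    (i : Fin n) : ContDiffAt ℝ (⊤ : ℕ∞) (pdy i F p) y := by
  have h1 : ContDiffAt ℝ (⊤ : ℕ∞) (fderiv ℝ (F p)) y :=
    h.fderiv_right (m := (⊤ : ℕ∞)) (by simp)
  exact h1.clm_apply contDiffAt_const

lemma pdy_comm {n : ℕ} {F : Fn n} {p y : Vec n} (h : ContDiffAt ℝ (⊤ : ℕ∞) (F p) y)
    (i j : Fin n) : pdy i (pdy j F) p y = pdy j (pdy i F) p y := by
  have h1 : DifferentiableAt ℝ (fderiv ℝ (F p)) y :=
    (h.fderiv_right (m := (⊤ : ℕ∞)) (by simp)).differentiableAt (by simp)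
  have key : ∀ a b : Fin n, pdy a (pdy b F) p y
      = fderiv ℝ (fderiv ℝ (F p)) y (Pi.single a 1) (Pi.single b 1) := by
    intro a b
    change fderiv ℝ (fun z => fderiv ℝ (F p) z (Pi.single b 1)) y (Pi.single a 1) = _
    rw [fderiv_clm_apply h1 (differentiableAt_const _)]
    simp
  rw [key, key]
  have hs : IsSymmSndFDerivAt ℝ (F p) y :=
    h.isSymmSndFDerivAt (by simp [minSmoothness_of_isRCLikeNormedField]; exact (WithTop.coe_le_coe.mpr le_top : ((2 : ℕ∞) : WithTop ℕ∞) ≤ _))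
  exact hs _ _

lemma contDiffAt_fiber {n : ℕ} {U : Set (Vec n)} (hU : IsOpen U) {E : Fn n}
    (hE : IsFinslerEnergy U E) {p : Vec n} (hp : p ∈ U) {y : Vec n} (hy : y ≠ 0) :
    ContDiffAt ℝ (⊤ : ℕ∞) (E p) y := by
  have hopen : IsOpen (U ×ˢ {y : Vec n | y ≠ 0}) := hU.prod isOpen_ne
  have h1 := hE.smooth.contDiffAt (x := (p, y)) (hopen.mem_nhds ⟨hp, hy⟩)
  exact h1.comp (f := fun z : Vec n => (p, z)) y (contDiffAt_const.prodMk contDiffAt_id)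

/-- Euler's relation for the 2-homogeneous energy, `y^j ∂_j E = 2E`. -/
lemma euler_energy {n : ℕ} {U : Set (Vec n)} (hU : IsOpen U) {E : Fn n}
    (hE : IsFinslerEnergy U E) {p : Vec n} (hp : p ∈ U) {y : Vec n} (hy : y ≠ 0) :
    ∑ j, y j * pdy j E p y = 2 * E p y := by
  have hd : DifferentiableAt ℝ (E p) y := (contDiffAt_fiber hU hE hp hy).differentiableAt (by simp)
  have hl : HasDerivAt (fun t : ℝ => t • y) y 1 := by
    simpa using (hasDerivAt_id (1 : ℝ)).smul_const y
  have h1 : HasDerivAt (fun t : ℝ => E p (t • y)) (fderiv ℝ (E p) y y) 1 := by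
    have : HasFDerivAt (E p) (fderiv ℝ (E p) y) ((1 : ℝ) • y) := by
      rw [one_smul]; exact hd.hasFDerivAt
    exact this.comp_hasDerivAt (1 : ℝ) hl
  have h2 : HasDerivAt (fun t : ℝ => t ^ 2 * E p y) (2 * E p y) 1 := by
    simpa using (hasDerivAt_pow 2 (1 : ℝ)).mul_const (E p y)
  have h3 : (fun t : ℝ => E p (t • y)) =ᶠ[nhds 1] fun t => t ^ 2 * E p y := by
    filter_upwards [lt_mem_nhds (zero_lt_one' ℝ)] with t ht
    exact hE.homog p hp y hy t ht
  rw [← h1.unique (h2.congr_of_eventuallyEq h3), fderiv_eq_sum]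
  rfl

/-- Euler's relation for the 1-homogeneous derivatives of the energy, `g_{ij} y^j = ∂_i E`. -/
lemma gdown_euler {n : ℕ} {U : Set (Vec n)} (hU : IsOpen U) {E : Fn n}
    (hE : IsFinslerEnergy U E) {p : Vec n} (hp : p ∈ U) {y : Vec n} (hy : y ≠ 0) (i : Fin n) :
    ∑ j, gdown E i j p y * y j = pdy i E p y := by
  have hc := contDiffAt_fiber hU hE hp hy
  have h3 : (fun z => ∑ j, z j * pdy j E p z) =ᶠ[nhds y] fun z => 2 * E p z := by
    filter_upwards [isOpen_ne.mem_nhds hy] with z hz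
    exact euler_energy hU hE hp hz
  have h4 := congrArg (fun L : Vec n →L[ℝ] ℝ => L (Pi.single i 1)) h3.fderiv_eq
  have hdj : ∀ j, DifferentiableAt ℝ (pdy j E p) y := fun j =>
    (contDiffAt_pdy hc j).differentiableAt (by simp)
  have hcoord : ∀ j, DifferentiableAt ℝ (fun z : Vec n => z j) y := fun j => by fun_prop
  have hder : ∀ j, fderiv ℝ (fun z : Vec n => z j) y (Pi.single i 1) = (Pi.single i 1 : Vec n) j := by
    intro j
    rw [(hasFDerivAt_apply j y).fderiv]; rfl
  rw [fderiv_fun_sum (fun j _ => (hcoord j).fun_mul (hdj j)),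
    fderiv_const_mul (hc.differentiableAt (by simp))] at h4
  simp only [sum_apply, smul_apply, smul_eq_mul] at h4
  have h5 : ∀ j, fderiv ℝ (fun z => z j * pdy j E p z) y (Pi.single i 1)
      = gdown E i j p y * y j + (Pi.single i 1 : Vec n) j * pdy j E p y := by
    intro j
    rw [fderiv_fun_mul (hcoord j) (hdj j)]
    simp only [add_apply, smul_apply, smul_eq_mul, hder]
    change y j * gdown E i j p y + _ = _
    ring
  simp only [h5, Finset.sum_add_distrib, Pi.single_apply, ite_mul, one_mul, zero_mul,
    Finset.sum_ite_eq', Finset.mem_univ, if_true] at h4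
  change _ = 2 * pdy i E p y at h4
  linarith

/-! ### The gradient and its fibre derivative -/

lemma differentiableAt_inv_entry {n : ℕ} {A : Vec n → Matrix (Fin n) (Fin n) ℝ} {y : Vec n}
    (hA : ∀ i j, DifferentiableAt ℝ (fun z => A z i j) y) (hdet : (A y).det ≠ 0) (l m : Fin n) :
    DifferentiableAt ℝ (fun z => (A z)⁻¹ l m) y := by
  have hd : ∀ B : Vec n → Matrix (Fin n) (Fin n) ℝ,
      (∀ i j, DifferentiableAt ℝ (fun z => B z i j) y) →
      DifferentiableAt ℝ (fun z => (B z).det) y := by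
    intro B hB
    simp only [Matrix.det_apply']
    refine DifferentiableAt.fun_sum fun σ _ => (differentiableAt_const _).mul ?_
    exact (HasFDerivAt.finsetProd fun i _ => (hB (σ i) i).hasFDerivAt).differentiableAt
  have hadj : DifferentiableAt ℝ (fun z => (A z).adjugate l m) y := by
    simp only [Matrix.adjugate_apply]
    refine hd _ fun i j => ?_
    by_cases him : i = m
    · subst him; simp
    · simpa [Matrix.updateRow_ne him] using hA i j
  simp only [Matrix.inv_def, Ring.inverse_eq_inv', Matrix.smul_apply, smul_eq_mul]
  exact ((hd A hA).inv hdet).mul hadj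

lemma differentiableAt_Xup {n : ℕ} {U : Set (Vec n)} (hU : IsOpen U) {E : Fn n}
    (hE : IsFinslerEnergy U E) (α : Vec n → ℝ) {p : Vec n} (hp : p ∈ U) {y : Vec n} (hy : y ≠ 0)
    (l : Fin n) : DifferentiableAt ℝ (Xup E α l p) y := by
  refine DifferentiableAt.fun_sum fun m _ => DifferentiableAt.mul_const ?_ _
  refine differentiableAt_inv_entry (A := gmat E p) (fun i j => ?_)
    (hE.posdef p hp y hy).det_pos.ne' l m
  exact (contDiffAt_pdy (contDiffAt_pdy (contDiffAt_fiber hU hE hp hy) j) i).differentiableAt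
    (by simp)

/-- Lowering the index of the gradient: `g_{il} X^l = α_i`. -/
lemma gdown_Xup {n : ℕ} {U : Set (Vec n)} {E : Fn n}
    (hE : IsFinslerEnergy U E) (α : Vec n → ℝ) {p : Vec n} (hp : p ∈ U) {y : Vec n} (hy : y ≠ 0)
    (i : Fin n) : ∑ l, gdown E i l p y * Xup E α l p y = pda α i p := by
  have hu : IsUnit (gmat E p y).det := (hE.posdef p hp y hy).det_pos.ne'.isUnit
  have h : gmat E p y *ᵥ ((gmat E p y)⁻¹ *ᵥ fun m => pda α m p) = fun m => pda α m p := by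
    rw [Matrix.mulVec_mulVec, Matrix.mul_nonsing_inv _ hu, Matrix.one_mulVec]
  exact congrFun h i

/-- The fibre derivative of `g_{il} X^l = α_i`, whose right-hand side does not depend on `y`:
`C_{ils} X^l + g_{il} X^l_s = 0`. -/
lemma gdown_XupD {n : ℕ} {U : Set (Vec n)} (hU : IsOpen U) {E : Fn n}
    (hE : IsFinslerEnergy U E) (α : Vec n → ℝ) {p : Vec n} (hp : p ∈ U) {y : Vec n} (hy : y ≠ 0)
    (i s : Fin n) : ∑ l, gdown E i l p y * XupD E α l s p y
      = - ∑ l, cartanDown E i l s p y * Xup E α l p y := by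
  have h3 : (fun z => ∑ l, gdown E i l p z * Xup E α l p z) =ᶠ[nhds y] fun _ => pda α i p := by
    filter_upwards [isOpen_ne.mem_nhds hy] with z hz
    exact gdown_Xup hE α hp hz i
  have hg : ∀ l, DifferentiableAt ℝ (gdown E i l p) y := fun l =>
    (contDiffAt_pdy (contDiffAt_pdy (contDiffAt_fiber hU hE hp hy) l) i).differentiableAt (by simp)
  have hX := differentiableAt_Xup hU hE α hp hy
  have h4 := congrArg (fun L : Vec n →L[ℝ] ℝ => L (Pi.single s 1)) h3.fderiv_eq
  rw [fderiv_fun_sum (fun l _ => (hg l).fun_mul (hX l))] at h4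
  have h5 : ∀ l, fderiv ℝ (fun z => gdown E i l p z * Xup E α l p z) y (Pi.single s 1)
      = gdown E i l p y * XupD E α l s p y + cartanDown E i l s p y * Xup E α l p y := by
    intro l
    rw [fderiv_fun_mul (hg l) (hX l)]
    simp only [add_apply, smul_apply, smul_eq_mul]
    rw [mul_comm (Xup E α l p y)]
    rfl
  simp only [sum_apply, h5, Finset.sum_add_distrib] at h4
  simp at h4
  linarith

lemma gdown_symm {n : ℕ} {U : Set (Vec n)} (hU : IsOpen U) {E : Fn n}
    (hE : IsFinslerEnergy U E) {p : Vec n} (hp : p ∈ U) {y : Vec n} (hy : y ≠ 0) (i j : Fin n) :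
    gdown E i j p y = gdown E j i p y :=
  pdy_comm (contDiffAt_fiber hU hE hp hy) i j

lemma cartanDown_symm {n : ℕ} {U : Set (Vec n)} (hU : IsOpen U) {E : Fn n}
    (hE : IsFinslerEnergy U E) {p : Vec n} (hp : p ∈ U) {y : Vec n} (hy : y ≠ 0) (i j k : Fin n) :
    cartanDown E i j k p y = cartanDown E k j i p y :=
  pdy_comm (contDiffAt_pdy (contDiffAt_fiber hU hE hp hy) j) k i

/-- The index-lowered form of `W^l = X^s X^l_s` is the fibre differential of `X^lα_l`:
both equal `-C_{ils} X^l X^s`. -/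
lemma gdown_Wup {n : ℕ} {U : Set (Vec n)} (hU : IsOpen U) {E : Fn n}
    (hE : IsFinslerEnergy U E) (α : Vec n → ℝ) {p : Vec n} (hp : p ∈ U) {y : Vec n} (hy : y ≠ 0)
    (i : Fin n) : ∑ l, gdown E i l p y * Wup E α l p y = pdy i (Xalpha E α) p y := by
  have hX := differentiableAt_Xup hU hE α hp hy
  have hL : ∑ l, gdown E i l p y * Wup E α l p y
      = ∑ s, Xup E α s p y * ∑ l, gdown E i l p y * XupD E α l s p y := by
    simp only [Wup, Finset.mul_sum]
    rw [Finset.sum_comm]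
    exact Finset.sum_congr rfl fun s _ => Finset.sum_congr rfl fun l _ => by ring
  have hR : pdy i (Xalpha E α) p y
      = ∑ s, Xup E α s p y * ∑ l, gdown E s l p y * XupD E α l i p y := by
    have h1 : pdy i (Xalpha E α) p y = ∑ l, XupD E α l i p y * pda α l p := by
      change fderiv ℝ (fun z => ∑ l, Xup E α l p z * pda α l p) y (Pi.single i 1) = _
      rw [fderiv_fun_sum (fun l _ => (hX l).mul_const _), sum_apply]
      refine Finset.sum_congr rfl fun l _ => ?_
      rw [fderiv_mul_const (hX l), smul_apply, smul_eq_mul, mul_comm]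
      rfl
    rw [h1]
    simp only [← gdown_Xup hE α hp hy, Finset.mul_sum]
    rw [Finset.sum_comm]
    refine Finset.sum_congr rfl fun s _ => Finset.sum_congr rfl fun l _ => ?_
    rw [gdown_symm hU hE hp hy l s]; ring
  rw [hL, hR]
  refine Finset.sum_congr rfl fun s _ => ?_
  rw [gdown_XupD hU hE α hp hy, gdown_XupD hU hE α hp hy]
  simp only [cartanDown_symm hU hE hp hy i _ s]

/-! ### Proportionality of `dE` and `dE_*` on `ker dα` -/

/-- The fibre differential of the Riemannian energy `E_* = E·X^lα_l`. -/
lemma gs_mulVec {n : ℕ} {U : Set (Vec n)} (hU : IsOpen U) {E : Fn n}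
    (hE : IsFinslerEnergy U E) (α : Vec n → ℝ) {p : Vec n} (hp : p ∈ U)
    {gs : Matrix (Fin n) (Fin n) ℝ} (hsym : gs.IsSymm)
    (hquad : ∀ y : Vec n, y ≠ 0 →
      Estar E α p y = (1/2) * ∑ i, ∑ j, gs i j * y i * y j)
    {y : Vec n} (hy : y ≠ 0) (k : Fin n) :
    (gs *ᵥ y) k = Xalpha E α p y * pdy k E p y + E p y * pdy k (Xalpha E α) p y := by
  have hEd : DifferentiableAt ℝ (E p) y := (contDiffAt_fiber hU hE hp hy).differentiableAt (by simp)
  have hXd : DifferentiableAt ℝ (Xalpha E α p) y :=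
    DifferentiableAt.fun_sum fun l _ => (differentiableAt_Xup hU hE α hp hy l).mul_const _
  have h3 : (fun z => E p z * Xalpha E α p z) =ᶠ[nhds y]
      fun z => (1/2) * ∑ i, ∑ j, gs i j * z i * z j := by
    filter_upwards [isOpen_ne.mem_nhds hy] with z hz
    exact hquad z hz
  have h4 := congrArg (fun L : Vec n →L[ℝ] ℝ => L (Pi.single k 1)) h3.fderiv_eq
  have hq : HasFDerivAt (fun z : Vec n => (1/2 : ℝ) * ∑ i, ∑ j, gs i j * z i * z j)
      ((1/2 : ℝ) • ∑ i, ∑ j, ((gs i j * y i) • ContinuousLinearMap.proj (R := ℝ) (φ := fun _ : Fin n => ℝ) j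
        + (y j) • (gs i j • ContinuousLinearMap.proj (R := ℝ) (φ := fun _ : Fin n => ℝ) i))) y := by
    refine HasFDerivAt.const_mul (HasFDerivAt.fun_sum fun i _ => HasFDerivAt.fun_sum fun j _ => ?_) _
    exact ((hasFDerivAt_apply i y).const_mul _).mul (hasFDerivAt_apply j y)
  rw [hq.fderiv, fderiv_fun_mul hEd hXd] at h4
  simp only [add_apply, smul_apply, smul_eq_mul,
    sum_apply, ContinuousLinearMap.proj_apply, Pi.single_apply,
    mul_ite, mul_one, mul_zero, Finset.sum_add_distrib, Finset.sum_ite_eq', Finset.mem_univ,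
    if_true] at h4
  have h5 : ∑ i, gs i k * y i = (gs *ᵥ y) k :=
    Finset.sum_congr rfl fun i _ => by rw [hsym.apply]
  have h6 : ∑ i, ∑ j, (if i = k then y j * gs i j else 0) = (gs *ᵥ y) k := by
    rw [Finset.sum_comm]
    simp only [Finset.sum_ite_eq', Finset.mem_univ, if_true]
    exact Finset.sum_congr rfl fun i _ => mul_comm _ _
  rw [h5, h6] at h4
  change E p y * pdy k (Xalpha E α) p y + Xalpha E α p y * pdy k E p y = _ at h4
  linarith

/-- If `η` and `W` are dependent at `y`, then `dE` and `dE_*` are proportional on `ker dα`. -/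
lemma wedge_zero {n : ℕ} {U : Set (Vec n)} (hU : IsOpen U) {E : Fn n}
    (hE : IsFinslerEnergy U E) (α : Vec n → ℝ) {p : Vec n} (hp : p ∈ U)
    (ha : (fun m => pda α m p) ≠ 0)
    {gs : Matrix (Fin n) (Fin n) ℝ} (hsym : gs.IsSymm)
    (hquad : ∀ y : Vec n, y ≠ 0 →
      Estar E α p y = (1/2) * ∑ i, ∑ j, gs i j * y i * y j)
    {y : Vec n} (hy : y ≠ 0)
    (hdep : ¬ LinearIndependent ℝ ![(fun l => etaUp E α l p y), (fun l => Wup E α l p y)])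
    {u v : Vec n} (hu : u ⬝ᵥ (fun m => pda α m p) = 0) (hv : v ⬝ᵥ (fun m => pda α m p) = 0) :
    (u ⬝ᵥ fun i => pdy i E p y) * (v ⬝ᵥ gs *ᵥ y)
      = (v ⬝ᵥ fun i => pdy i E p y) * (u ⬝ᵥ gs *ᵥ y) := by
  set a : Vec n := fun m => pda α m p with ha_def
  set k : ℝ := yalpha α p y / (2 * E p y) with hk
  have hst : ∃ s t : ℝ, (∀ l, s * etaUp E α l p y + t * Wup E α l p y = 0) ∧ ¬ (s = 0 ∧ t = 0) := by
    rw [LinearIndependent.pair_iff] at hdep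
    push Not at hdep
    obtain ⟨s, t, h, hne⟩ := hdep
    exact ⟨s, t, fun l => congrFun h l, fun hh => hne hh.1 hh.2⟩
  obtain ⟨s, t, hlin, hne⟩ := hst
  have hcov : ∀ i, s * (a i - k * pdy i E p y) + t * pdy i (Xalpha E α) p y = 0 := by
    intro i
    have h0 : ∑ l, gdown E i l p y * (s * etaUp E α l p y + t * Wup E α l p y) = 0 :=
      Finset.sum_eq_zero fun l _ => by rw [hlin l, mul_zero]
    rw [ha_def, ← gdown_Wup hU hE α hp hy, ← gdown_euler hU hE hp hy]
    simp only
    rw [← gdown_Xup hE α hp hy, ← h0]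
    simp only [etaUp, Finset.mul_sum, ← Finset.sum_sub_distrib, ← Finset.sum_add_distrib]
    exact Finset.sum_congr rfl fun l _ => by ring
  have hgs : gs *ᵥ y = Xalpha E α p y • (fun i => pdy i E p y)
      + E p y • fun i => pdy i (Xalpha E α) p y :=
    funext fun i => gs_mulVec hU hE α hp hsym hquad hy i
  have hvec : s • (a - k • fun i => pdy i E p y) + t • (fun i => pdy i (Xalpha E α) p y) = 0 :=
    funext hcov
  have hpair : ∀ w : Vec n, w ⬝ᵥ a = 0 → - (s * (k * (w ⬝ᵥ fun i => pdy i E p y)))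
      + t * (w ⬝ᵥ fun i => pdy i (Xalpha E α) p y) = 0 := by
    intro w hw
    have := congrArg (fun x => w ⬝ᵥ x) hvec
    simp only [dotProduct_add, dotProduct_smul, dotProduct_sub, dotProduct_zero, smul_eq_mul, hw] at this
    linarith
  have hu' := hpair u hu
  have hv' := hpair v hv
  rw [hgs]
  simp only [dotProduct_add, dotProduct_smul, smul_eq_mul]
  generalize (u ⬝ᵥ fun i => pdy i (Xalpha E α) p y) = φu at *
  generalize (v ⬝ᵥ fun i => pdy i (Xalpha E α) p y) = φv at *
  by_cases ht : t = 0
  · have hs : s ≠ 0 := fun h => hne ⟨h, ht⟩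
    -- here `η = 0`, so `dα = k dE` with `k ≠ 0`, and `dE` vanishes on `ker dα`
    have hk0 : k ≠ 0 := by
      intro h0
      apply ha
      simpa [ht, h0, hs] using hvec
    have hu0 : (u ⬝ᵥ fun i => pdy i E p y) = 0 := by simpa [ht, hs, hk0] using hu'
    have hv0 : (v ⬝ᵥ fun i => pdy i E p y) = 0 := by simpa [ht, hs, hk0] using hv'
    rw [hu0, hv0]; ring
  · apply mul_left_cancel₀ ht
    linear_combination (E p y) * ((u ⬝ᵥ fun i => pdy i E p y) * hv' - (v ⬝ᵥ fun i => pdy i E p y) * hu')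

/-- Differentiating the proportionality of `dE` and `dE_*` on `ker dα` in the direction `X_*`:
the terms with `g_*(X_*, ·) = dα` vanish on `ker dα`, so `g(X_*, ·)` is proportional to
`g_*(y, ·)` there. -/
lemma wedge_deriv {n : ℕ} {U : Set (Vec n)} (hU : IsOpen U) {E : Fn n}
    (hE : IsFinslerEnergy U E) {p : Vec n} (hp : p ∈ U) (gs : Matrix (Fin n) (Fin n) ℝ)
    {a xs : Vec n} (hxs : gs *ᵥ xs = a) {u v : Vec n} (hu : u ⬝ᵥ a = 0) (hv : v ⬝ᵥ a = 0)
    (hw : ∀ y : Vec n, y ≠ 0 → (u ⬝ᵥ fun i => pdy i E p y) * (v ⬝ᵥ gs *ᵥ y)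
      = (v ⬝ᵥ fun i => pdy i E p y) * (u ⬝ᵥ gs *ᵥ y))
    {y : Vec n} (hy : y ≠ 0) :
    (u ⬝ᵥ gmat E p y *ᵥ xs) * (v ⬝ᵥ gs *ᵥ y) = (v ⬝ᵥ gmat E p y *ᵥ xs) * (u ⬝ᵥ gs *ᵥ y) := by
  have hc := contDiffAt_fiber hU hE hp hy
  have hdi : ∀ i, DifferentiableAt ℝ (pdy i E p) y := fun i =>
    (contDiffAt_pdy hc i).differentiableAt (by simp)
  have hl : HasDerivAt (fun t : ℝ => y + t • xs) xs 0 := by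
    simpa using ((hasDerivAt_id (0 : ℝ)).smul_const xs).const_add y
  have hA : ∀ w : Vec n, HasDerivAt (fun t : ℝ => w ⬝ᵥ fun i => pdy i E p (y + t • xs))
      (w ⬝ᵥ gmat E p y *ᵥ xs) 0 := by
    intro w
    change HasDerivAt (fun t : ℝ => ∑ i, w i * pdy i E p (y + t • xs))
      (∑ i, w i * (gmat E p y *ᵥ xs) i) 0
    refine HasDerivAt.fun_sum fun i _ => HasDerivAt.const_mul (w i) ?_
    have h1 : HasFDerivAt (pdy i E p) (fderiv ℝ (pdy i E p) y) (y + (0 : ℝ) • xs) := by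
      rw [zero_smul, add_zero]; exact (hdi i).hasFDerivAt
    have h2 := h1.comp_hasDerivAt (0 : ℝ) hl
    rw [fderiv_eq_sum] at h2
    have e : (gmat E p y *ᵥ xs) i = ∑ j, xs j * fderiv ℝ (pdy i E p) y (Pi.single j 1) := by
      change ∑ j, gmat E p y i j * xs j = _
      refine Finset.sum_congr rfl fun j _ => ?_
      rw [mul_comm]
      exact congrArg (xs j * ·) (gdown_symm hU hE hp hy i j)
    rw [e]
    exact h2
  have hB : ∀ w : Vec n, w ⬝ᵥ a = 0 → ∀ t : ℝ, w ⬝ᵥ gs *ᵥ (y + t • xs) = w ⬝ᵥ gs *ᵥ y := by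
    intro w hw0 t
    rw [Matrix.mulVec_add, Matrix.mulVec_smul, hxs, dotProduct_add, dotProduct_smul, hw0]
    simp
  have h3 : (fun t : ℝ => (u ⬝ᵥ fun i => pdy i E p (y + t • xs)) * (v ⬝ᵥ gs *ᵥ y)) =ᶠ[nhds 0]
      fun t : ℝ => (v ⬝ᵥ fun i => pdy i E p (y + t • xs)) * (u ⬝ᵥ gs *ᵥ y) := by
    have hcont : ContinuousAt (fun t : ℝ => y + t • xs) 0 := hl.continuousAt
    have : ∀ᶠ t in nhds (0 : ℝ), y + t • xs ≠ 0 :=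
      hcont.eventually_ne (by simpa using hy)
    filter_upwards [this] with t ht
    have := hw _ ht
    rwa [hB u hu, hB v hv] at this
  exact ((hA u).mul_const _).unique ((((hA v).mul_const _)).congr_of_eventuallyEq h3)

/-! ### Linear algebra of two inner products -/

lemma posDef_dot_eq_zero {n : ℕ} {G : Matrix (Fin n) (Fin n) ℝ} (hG : G.PosDef) {z : Vec n}
    (h : z ⬝ᵥ G *ᵥ z = 0) : z = 0 := by
  by_contra hz
  have := hG.dotProduct_mulVec_pos hz
  simp only [star_trivial] at this
  linarith

lemma symm_dot {n : ℕ} {G : Matrix (Fin n) (Fin n) ℝ} (hG : G.PosDef) (u v : Vec n) :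
    u ⬝ᵥ G *ᵥ v = v ⬝ᵥ G *ᵥ u := by
  have hs : Gᵀ = G := by simpa [Matrix.IsHermitian] using hG.isHermitian
  rw [Matrix.dotProduct_mulVec, ← Matrix.mulVec_transpose, hs, dotProduct_comm]

/-- A vector orthogonal to the kernel of the covector `a` is a multiple of its gradient. -/
lemma mem_span_grad {n : ℕ} {G : Matrix (Fin n) (Fin n) ℝ} (hG : G.PosDef) {a x : Vec n}
    (ha : a ≠ 0) (hx : G *ᵥ x = a) {z : Vec n}
    (hz : ∀ u : Vec n, u ⬝ᵥ a = 0 → u ⬝ᵥ G *ᵥ z = 0) : ∃ c : ℝ, z = c • x := by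
  have hxx : x ⬝ᵥ a ≠ 0 := by
    intro h
    have : x = 0 := posDef_dot_eq_zero hG (by rw [hx, h])
    apply ha
    rw [← hx, this, Matrix.mulVec_zero]
  refine ⟨(z ⬝ᵥ a) / (x ⬝ᵥ a), sub_eq_zero.mp ?_⟩
  set w := z - ((z ⬝ᵥ a) / (x ⬝ᵥ a)) • x with hw
  have hwa : w ⬝ᵥ a = 0 := by
    rw [hw, sub_dotProduct, smul_dotProduct, smul_eq_mul]
    field_simp
    ring
  apply posDef_dot_eq_zero hG
  conv_lhs => rw [hw, Matrix.mulVec_sub, Matrix.mulVec_smul, hx, dotProduct_sub, dotProduct_smul]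
  rw [← hw, hwa, hz w hwa]
  simp

/-- If on `ker a` both `G y` and `G X_*` are proportional to `G_* y`, where `X` and `X_*` are
the gradients of `a` for `G` and `G_*`, then `X`, `X_*`, `y` are dependent. -/
lemma exists_relation {n : ℕ} {G S : Matrix (Fin n) (Fin n) ℝ} (hG : G.PosDef) (hS : S.PosDef)
    {a x xs y : Vec n} (ha : a ≠ 0) (hx : G *ᵥ x = a) (hxs : S *ᵥ xs = a)
    (h1 : ∀ u v : Vec n, u ⬝ᵥ a = 0 → v ⬝ᵥ a = 0 →
      (u ⬝ᵥ G *ᵥ y) * (v ⬝ᵥ S *ᵥ y) = (v ⬝ᵥ G *ᵥ y) * (u ⬝ᵥ S *ᵥ y))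
    (h2 : ∀ u v : Vec n, u ⬝ᵥ a = 0 → v ⬝ᵥ a = 0 →
      (u ⬝ᵥ G *ᵥ xs) * (v ⬝ᵥ S *ᵥ y) = (v ⬝ᵥ G *ᵥ xs) * (u ⬝ᵥ S *ᵥ y)) :
    ∃ c : Fin 3 → ℝ, c ≠ 0 ∧ c 0 • x + c 1 • xs + c 2 • y = 0 := by
  have hss : xs ⬝ᵥ a ≠ 0 := by
    intro h
    have : xs = 0 := posDef_dot_eq_zero hS (by rw [hxs, h])
    apply ha
    rw [← hxs, this, Matrix.mulVec_zero]
  -- `v` is the `S`-orthogonal projection of `y` to `ker a`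
  set r := (y ⬝ᵥ a) / (xs ⬝ᵥ a) with hr
  set v := y - r • xs with hv
  have hva : v ⬝ᵥ a = 0 := by
    rw [hv, sub_dotProduct, smul_dotProduct, smul_eq_mul, hr]
    field_simp
    ring
  have hvS : v ⬝ᵥ S *ᵥ y = v ⬝ᵥ S *ᵥ v := by
    conv_rhs => rw [hv, Matrix.mulVec_sub, Matrix.mulVec_smul, hxs, dotProduct_sub, dotProduct_smul]
    rw [← hv, hva]
    simp
  by_cases hv0 : v = 0
  · refine ⟨![0, -r, 1], fun h => by simpa using congrFun h 2, ?_⟩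
    simp only [Matrix.cons_val]
    rw [← hv0, hv]
    module
  have hq : v ⬝ᵥ S *ᵥ y ≠ 0 := by
    rw [hvS]
    exact fun h => hv0 (posDef_dot_eq_zero hS h)
  set κ := v ⬝ᵥ G *ᵥ y with hκ
  set μ := v ⬝ᵥ G *ᵥ xs with hμ
  by_cases hκ0 : κ = 0
  · obtain ⟨c, hc⟩ := mem_span_grad (z := y) hG ha hx fun u hu => by
      have := h1 u v hu hva
      rw [← hκ, hκ0, zero_mul] at this
      exact (mul_eq_zero.mp this).resolve_right hq
    refine ⟨![-c, 0, 1], fun h => by simpa using congrFun h 2, ?_⟩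
    simp only [Matrix.cons_val]
    rw [hc]
    module
  · obtain ⟨c, hc⟩ := mem_span_grad (z := κ • xs - μ • y) hG ha hx fun u hu => by
      have e1 := h1 u v hu hva
      have e2 := h2 u v hu hva
      rw [Matrix.mulVec_sub, Matrix.mulVec_smul, Matrix.mulVec_smul, dotProduct_sub,
        dotProduct_smul, dotProduct_smul, smul_eq_mul, smul_eq_mul]
      apply (mul_eq_zero.mp (?_ : _ * (v ⬝ᵥ S *ᵥ y) = 0)).resolve_right hq
      linear_combination κ * e2 - μ * e1
    refine ⟨![-c, κ, -μ], fun h => hκ0 (by simpa using congrFun h 1), ?_⟩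
    simp only [Matrix.cons_val]
    have : -c • x + κ • xs + -μ • y = (κ • xs - μ • y) - c • x := by module
    rw [this, hc, sub_self]

lemma gram_det_zero {n : ℕ} (g : Fin n → Fin n → ℝ) (b : Fin 3 → Vec n) (c : Fin 3 → ℝ)
    (hc : c ≠ 0) (hb : ∑ a, c a • b a = 0) :
    Matrix.det (Matrix.of fun i j : Fin 3 => ∑ l, ∑ k, b i l * b j k * g l k) = 0 := by
  refine Matrix.exists_vecMul_eq_zero_iff.mp ⟨c, hc, ?_⟩
  ext j
  have h0 : ∀ l, ∑ i, c i * b i l = 0 := fun l => by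
    simpa using congrFun hb l
  have : (c ᵥ* Matrix.of fun i j : Fin 3 => ∑ l, ∑ k, b i l * b j k * g l k) j
      = ∑ l, ∑ k, (∑ i, c i * b i l) * (b j k * g l k) := by
    simp only [Matrix.vecMul, dotProduct, Matrix.of_apply, Finset.mul_sum, Finset.sum_mul]
    rw [Finset.sum_comm]
    refine Finset.sum_congr rfl fun l _ => ?_
    rw [Finset.sum_comm]
    exact Finset.sum_congr rfl fun k _ => Finset.sum_congr rfl fun i _ => by ring
  rw [this]
  simp [h0]

/-- Theorem 2 of the paper. Under the contracted conformal invariance of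
the mixed Berwald curvature and the linear dependence of `η` and `W = X^sX^l_s` over `p`,
the Riemann–Finsler gradient `X`, the vertically lifted Riemannian gradient `X_*` and the
Liouville vector `y` are linearly dependent at all nonzero `y` over `p`; equivalently,
their 3×3 Gram determinant with respect to `g_{ij}(p,y)` vanishes. -/
theorem gradients_and_liouville_linearly_dependent
    {n : ℕ} (hn : 2 ≤ n) (U : Set (Vec n)) (hU : IsOpen U)
    (E : Fn n) (hE : IsFinslerEnergy U E)
    (α : Vec n → ℝ) (hα : ContDiffOn ℝ (⊤ : ℕ∞) α U)
    (p : Vec n) (hp : p ∈ U) (hdα : fderiv ℝ α p ≠ 0)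
    (hinv : ∀ x ∈ U, ∀ y : Vec n, y ≠ 0 → ∀ i j k : Fin n,
      (∑ l, mixedCurv (confE E α) l i j k x y * pda α l x) =
        ∑ l, mixedCurv E l i j k x y * pda α l x)
    (gs : Matrix (Fin n) (Fin n) ℝ) (hsym : gs.IsSymm) (hpos : gs.PosDef)
    (hquad : ∀ y : Vec n, y ≠ 0 →
      Estar E α p y = (1/2) * ∑ i, ∑ j, gs i j * y i * y j)
    (hdep : ∀ y : Vec n, y ≠ 0 →
      ¬ LinearIndependent ℝ ![(fun l => etaUp E α l p y), (fun l => Wup E α l p y)]) :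
    ∀ y : Vec n, y ≠ 0 →
      ¬ LinearIndependent ℝ ![(fun l => Xup E α l p y), Xstar α gs p, y] ∧
      Matrix.det (Matrix.of fun a b : Fin 3 =>
        ∑ l, ∑ k,
          (![(fun l' => Xup E α l' p y), Xstar α gs p, y] a) l *
          (![(fun l' => Xup E α l' p y), Xstar α gs p, y] b) k *
          gdown E l k p y) = 0 := by
  intro y hy
  have ha : (fun m => pda α m p) ≠ 0 := by
    intro h
    apply hdα
    ext u
    rw [fderiv_eq_sum]
    exact Finset.sum_eq_zero fun i _ => by
      rw [show fderiv ℝ α p (Pi.single i 1) = 0 from congrFun h i, mul_zero]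
  have hxs : gs *ᵥ Xstar α gs p = fun m => pda α m p := by
    change gs *ᵥ (gs⁻¹ *ᵥ fun m => pda α m p) = _
    rw [Matrix.mulVec_mulVec, Matrix.mul_nonsing_inv _ hpos.det_pos.ne'.isUnit,
      Matrix.one_mulVec]
  have hGy : gmat E p y *ᵥ y = fun i => pdy i E p y :=
    funext fun i => gdown_euler hU hE hp hy i
  obtain ⟨c, hc, hrel⟩ := exists_relation (hE.posdef p hp y hy) hpos ha
    (funext fun i => gdown_Xup hE α hp hy i) hxs (y := y)
    (fun u v hu hv => by
      rw [hGy]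
      exact wedge_zero hU hE α hp ha hsym hquad hy (hdep y hy) hu hv)
    (fun u v hu hv => wedge_deriv hU hE hp gs hxs hu hv
      (fun z hz => wedge_zero hU hE α hp ha hsym hquad hz (hdep z hz) hu hv) hy)
  have hsum : ∑ i, c i • (![(fun l' => Xup E α l' p y), Xstar α gs p, y] i) = 0 := by
    rw [Fin.sum_univ_three]
    exact hrel
  refine ⟨fun hli => hc (funext (Fintype.linearIndependent_iff.mp hli c hsum)), ?_⟩
  exact gram_det_zero (fun l k => gdown E l k p y) _ c hc hsum

end FinslerConformal
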